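/- arXiv:math/0104131 — 3 statements merged into one kernel-verified Lean document; each statement's English description precedes it below -/
import Mathlib

section
/- Let m be a positive integer. Then for every function x : ℕ → ℚ, 2·I_{2m}(y) = I_m(x) + I_m(w), where y : ℕ → ℚ is defined by y(r) := 0 for odd r and y(r) := x(r/2) for even r, and w : ℕ → ℚ is defined by w(r) := 0 for odd r and w(r) := x(r) for even r. -/
open Finset

/-- Cycle index of the regular cyclic group of order `n`:
`I_n(x) = (1/n) * ∑_{r | n} φ(r) * x(r)^(n/r)`. -/
def cycleIndex (n : ℕ) (x : ℕ → ℚ) : ℚ :=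
  (1 / (n : ℚ)) * ∑ r ∈ n.divisors, (Nat.totient r : ℚ) * x r ^ (n / r)

/-! Replace `2` by a prime `p`. Only the divisors `r = p * s` of `p * m` contribute to the left-hand
side, with the exponent `p * m / r = m / s` of the cycle index of order `m`. The two terms on the
right come from `φ (p * s) = (p - 1) * φ s + [p ∣ s] * φ s`. -/

theorem divisors_mul_filter_dvd {k : ℕ} (hk : k ≠ 0) (m : ℕ) :
    {r ∈ (k * m).divisors | k ∣ r} = m.divisors.image (k * ·) := by
  ext r
  simp only [mem_filter, mem_image, Nat.mem_divisors]
  constructor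
  · rintro ⟨⟨hdvd, hne⟩, s, rfl⟩
    exact ⟨s, ⟨Nat.dvd_of_mul_dvd_mul_left (Nat.pos_of_ne_zero hk) hdvd,
      right_ne_zero_of_mul hne⟩, rfl⟩
  · rintro ⟨s, ⟨hdvd, hm⟩, rfl⟩
    exact ⟨⟨mul_dvd_mul_left k hdvd, mul_ne_zero hk hm⟩, dvd_mul_right k s⟩

theorem sum_divisors_mul_filter_dvd {M : Type*} [AddCommMonoid M] {k : ℕ} (hk : k ≠ 0) (m : ℕ)
    (f : ℕ → M) :
    ∑ r ∈ (k * m).divisors with k ∣ r, f r = ∑ s ∈ m.divisors, f (k * s) := by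
  rw [divisors_mul_filter_dvd hk, sum_image (mul_right_injective₀ hk).injOn]

theorem totient_prime_mul {R : Type*} [Ring R] {p : ℕ} (hp : p.Prime) (n : ℕ) :
    (Nat.totient (p * n) : R) =
      (p - 1) * Nat.totient n + if p ∣ n then (Nat.totient n : R) else 0 := by
  split_ifs with h
  · rw [Nat.totient_mul_of_prime_of_dvd hp h, Nat.cast_mul, sub_one_mul, sub_add_cancel]
  · rw [Nat.totient_mul_of_prime_of_not_dvd hp h, Nat.cast_mul, Nat.cast_pred hp.pos, add_zero]

theorem cycleIndex_ite (n : ℕ) (P : ℕ → Prop) [DecidablePred P] (x : ℕ → ℚ) :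
    cycleIndex n (fun r => if P r then x r else 0) =
      (1 / (n : ℚ)) * ∑ r ∈ n.divisors with P r, (Nat.totient r : ℚ) * x r ^ (n / r) := by
  rw [cycleIndex, sum_filter]
  congr 1
  refine sum_congr rfl fun r hr => ?_
  have exponent_ne_zero : n / r ≠ 0 :=
    (Nat.div_pos (Nat.divisor_le hr) (Nat.pos_of_mem_divisors hr)).ne'
  rw [ite_pow, zero_pow exponent_ne_zero, mul_ite, mul_zero]

theorem cycleIndex_mul_ite_dvd {k : ℕ} (hk : k ≠ 0) (m : ℕ) (x : ℕ → ℚ) :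
    cycleIndex (k * m) (fun r => if k ∣ r then x (r / k) else 0) =
      (1 / ((k * m : ℕ) : ℚ)) *
        ∑ s ∈ m.divisors, (Nat.totient (k * s) : ℚ) * x s ^ (m / s) := by
  have hk_pos : 0 < k := Nat.pos_of_ne_zero hk
  rw [cycleIndex_ite, sum_divisors_mul_filter_dvd hk]
  simp only [Nat.mul_div_cancel_left _ hk_pos, Nat.mul_div_mul_left _ _ hk_pos]

theorem two_mul_cycleIndex_shift_general {p : ℕ} (hp : p.Prime) {m : ℕ} (hm : 0 < m)
    (x : ℕ → ℚ) :
    p * cycleIndex (p * m) (fun r => if p ∣ r then x (r / p) else 0) =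
      (p - 1) * cycleIndex m x + cycleIndex m (fun r => if p ∣ r then x r else 0) := by
  have hp_ne_zero : (p : ℚ) ≠ 0 := Nat.cast_ne_zero.mpr hp.ne_zero
  have hm_ne_zero : (m : ℚ) ≠ 0 := Nat.cast_ne_zero.mpr hm.ne'
  have totient_sum :
      ∑ s ∈ m.divisors, (Nat.totient (p * s) : ℚ) * x s ^ (m / s) =
        (p - 1) * ∑ s ∈ m.divisors, (Nat.totient s : ℚ) * x s ^ (m / s) +
          ∑ s ∈ m.divisors with p ∣ s, (Nat.totient s : ℚ) * x s ^ (m / s) := by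
    simp only [totient_prime_mul hp, add_mul, ite_mul, zero_mul, sum_add_distrib, mul_sum,
      sum_filter, mul_assoc]
  rw [cycleIndex_mul_ite_dvd hp.ne_zero, cycleIndex_ite, cycleIndex, totient_sum, Nat.cast_mul]
  field_simp

/-- `2·I_{2m}(y) = I_m(x) + I_m(w)`, where `y(r) = 0` for odd `r`,
`y(r) = x(r/2)` for even `r`; `w(r) = 0` for odd `r`, `w(r) = x(r)` for even `r`. -/
theorem two_mul_cycleIndex_shift (m : ℕ) (hm : 0 < m) (x : ℕ → ℚ) :
    2 * cycleIndex (2 * m) (fun r => if Odd r then 0 else x (r / 2)) =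
      cycleIndex m x + cycleIndex m (fun r => if Odd r then 0 else x r) := by
  simp only [← Nat.not_even_iff_odd, even_iff_two_dvd, ite_not]
  linear_combination two_mul_cycleIndex_shift_general Nat.prime_two hm x
end

section
/- Let p > 3 be a prime such that q = (p+1)/2 is also prime, and write p − 1 = 2^{k+1}·p̃ with p̃ odd (here k ≥ 1 since 4 divides p − 1). Then for every z ∈ ℚ, 2·(1+z)·c_d(p, z) = c_d(p+1, z) + (1+z)·c̄_u(2p̃+1, z^{2^k}). -/
open Finset

/-- Generating function by valency for directed circulant graphs of odd prime
order `p`: `c_d(p,z) = (1/(p-1))·∑_{r | p-1} φ(r)·(1+z^r)^{(p-1)/r}`. -/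
def cDPrime (p : ℕ) (z : ℚ) : ℚ :=
  (1 / ((p : ℚ) - 1)) *
    ∑ r ∈ (p - 1).divisors, (Nat.totient r : ℚ) * (1 + z ^ r) ^ ((p - 1) / r)

/-- Generating function by valency for directed circulant graphs of order `2q`,
`q` an odd prime:
`c_d(2q,z) = (1+z)·(1/(q-1))·∑_{r | q-1} φ(r)·(1+z^r)^{2(q-1)/r}`. -/
def cDTwicePrime (q : ℕ) (z : ℚ) : ℚ :=
  (1 + z) * ((1 / ((q : ℚ) - 1)) *
    ∑ r ∈ (q - 1).divisors, (Nat.totient r : ℚ) * (1 + z ^ r) ^ (2 * (q - 1) / r))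

/-- For odd `p̃`, `c̄_u(2p̃+1, w) = (1/p̃)·∑_{r | p̃} φ(r)·(1+w^{2r})^{p̃/r}`
(the formula counting undirected circulants of order `2p̃+1` when that is prime). -/
def cUBar (pt : ℕ) (w : ℚ) : ℚ :=
  (1 / (pt : ℚ)) *
    ∑ r ∈ pt.divisors, (Nat.totient r : ℚ) * (1 + w ^ (2 * r)) ^ (pt / r)

/-! All three generating functions are normalized Burnside sums of cyclic groups. As `m` is odd, a
divisor of `2 ^ (k + 1) * m` either divides `2 ^ k * m` or equals `2 ^ (k + 1) * d` with `d ∣ m`.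
In the Burnside sum of `c_d(p, z)` the divisors of the first kind are those occurring in
`c_d(p + 1, z)`, and those of the second kind give `2 ^ k` times the sum of `c̄_u`, because
`φ (2 ^ (k + 1) * d) = 2 ^ k * φ d`. -/

section SumDivisors

variable {M : Type*} [AddCommMonoid M]

theorem sum_divisors_mul_of_coprime {m n : ℕ} (hmn : m.Coprime n) (f : ℕ → M) :
    ∑ r ∈ (m * n).divisors, f r = ∑ a ∈ m.divisors, ∑ b ∈ n.divisors, f (a * b) := by
  rw [Nat.divisors_mul, Finset.mul_def, sum_image hmn.mul_injOn_divisors, sum_product]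

theorem sum_divisors_prime_pow_succ_mul {ℓ m : ℕ} (hℓ : ℓ.Prime) (hm : ℓ.Coprime m) (k : ℕ)
    (f : ℕ → M) :
    ∑ r ∈ (ℓ ^ (k + 1) * m).divisors, f r =
      ∑ r ∈ (ℓ ^ k * m).divisors, f r + ∑ d ∈ m.divisors, f (ℓ ^ (k + 1) * d) := by
  simp only [sum_divisors_mul_of_coprime (hm.pow_left _), Nat.sum_divisors_prime_pow hℓ]
  exact sum_range_succ _ _

end SumDivisors

section BurnsideSum

variable {R : Type*} [Semiring R]

/-- The Burnside sum for subsets of an `N`-element set under a semiregular action of a cyclic group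
of order `n`: each of the `φ r` group elements of order `r` has `N / r` cycles of length `r`, so the
subsets it fixes are counted by `(1 + z ^ r) ^ (N / r)`, with `z` marking cardinality. The division
is exact when `n ∣ N`. -/
def cyclicBurnsideSum (n N : ℕ) (z : R) : R :=
  ∑ r ∈ n.divisors, (Nat.totient r : R) * (1 + z ^ r) ^ (N / r)

theorem cyclicBurnsideSum_prime_pow_succ_mul {ℓ m : ℕ} (hℓ : ℓ.Prime) (hm : ℓ.Coprime m)
    (k N : ℕ) (z : R) :
    cyclicBurnsideSum (ℓ ^ (k + 1) * m) N z =
      cyclicBurnsideSum (ℓ ^ k * m) N z +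
        (Nat.totient (ℓ ^ (k + 1)) : R) *
          cyclicBurnsideSum m (N / ℓ ^ (k + 1)) (z ^ ℓ ^ (k + 1)) := by
  unfold cyclicBurnsideSum
  rw [sum_divisors_prime_pow_succ_mul hℓ hm, mul_sum]
  congr 1
  refine sum_congr rfl fun d hd => ?_
  have hcop : (ℓ ^ (k + 1)).Coprime d :=
    (hm.coprime_dvd_right (Nat.dvd_of_mem_divisors hd)).pow_left _
  rw [Nat.totient_mul hcop, Nat.cast_mul, mul_assoc, pow_mul, Nat.div_div_eq_div_mul]

theorem cyclicBurnsideSum_two_pow_succ_mul_self {m : ℕ} (hm : Odd m) (k : ℕ) (z : R) :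
    cyclicBurnsideSum (2 ^ (k + 1) * m) (2 ^ (k + 1) * m) z =
      cyclicBurnsideSum (2 ^ k * m) (2 ^ (k + 1) * m) z +
        2 ^ k * cyclicBurnsideSum m m (z ^ 2 ^ (k + 1)) := by
  rw [cyclicBurnsideSum_prime_pow_succ_mul Nat.prime_two hm.coprime_two_left,
    Nat.mul_div_cancel_left _ (by positivity), Nat.totient_prime_pow_succ Nat.prime_two]
  simp

end BurnsideSum

theorem cDPrime_add_one (n : ℕ) (z : ℚ) :
    cDPrime (n + 1) z = 1 / n * cyclicBurnsideSum n n z := by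
  simp [cDPrime, cyclicBurnsideSum]

theorem cDTwicePrime_add_one (n : ℕ) (z : ℚ) :
    cDTwicePrime (n + 1) z = (1 + z) * (1 / n * cyclicBurnsideSum n (2 * n) z) := by
  simp [cDTwicePrime, cyclicBurnsideSum]

theorem cUBar_eq_cyclicBurnsideSum (n : ℕ) (w : ℚ) :
    cUBar n w = 1 / n * cyclicBurnsideSum n n (w ^ 2) := by
  simp only [cUBar, cyclicBurnsideSum, pow_mul]

theorem two_mul_cD_general (p q k pt : ℕ) (hpq : p + 1 = 2 * q) (hpt : Odd pt)
    (hfac : p - 1 = 2 ^ (k + 1) * pt) (z : ℚ) :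
    2 * (1 + z) * cDPrime p z = cDTwicePrime q z + (1 + z) * cUBar pt (z ^ 2 ^ k) := by
  have hpos : 0 < 2 ^ k * pt := mul_pos (by positivity) hpt.pos
  have hdouble : 2 ^ (k + 1) * pt = 2 * (2 ^ k * pt) := by ring
  obtain rfl : p = 2 ^ (k + 1) * pt + 1 := by lia
  obtain rfl : q = 2 ^ k * pt + 1 := by lia
  have hpt0 : (pt : ℚ) ≠ 0 := mod_cast hpt.pos.ne'
  rw [cDPrime_add_one, cDTwicePrime_add_one, cUBar_eq_cyclicBurnsideSum,
    cyclicBurnsideSum_two_pow_succ_mul_self hpt, ← hdouble, ← pow_mul, ← pow_succ]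
  push_cast
  field_simp
  ring

/-- If `p > 3` and `q = (p+1)/2` are both prime and `p - 1 = 2^{k+1}·p̃` with `p̃`
odd (`k ≥ 1`), then `2·(1+z)·c_d(p,z) = c_d(p+1,z) + (1+z)·c̄_u(2p̃+1, z^{2^k})`. -/
theorem two_mul_cD (p q k pt : ℕ) (hp : p.Prime) (hp3 : 3 < p)
    (hq : q.Prime) (hpq : p + 1 = 2 * q) (hk : 1 ≤ k) (hpt : Odd pt)
    (hfac : p - 1 = 2 ^ (k + 1) * pt) (z : ℚ) :
    2 * (1 + z) * cDPrime p z = cDTwicePrime q z + (1 + z) * cUBar pt (z ^ 2 ^ k) := by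
  exact two_mul_cD_general p q k pt hpq hpt hfac z
end

section
/- Let p > 3 be a prime such that q = (p+1)/2 is also prime. Then for every z ∈ ℚ, 2·(1+z)·(c_d(p, z) − c_u(p, z)) = c_d(p+1, z) − c_u(p+1, z); that is, the generating function for directed circulant graphs of order p+1 that are not undirected graphs equals 2·(1+z) times the corresponding generating function for order p. -/
open Finset

/-- Generating function by valency for undirected circulant graphs of odd prime
order `p`: `c_u(p,z) = (2/(p-1))·∑_{r | (p-1)/2} φ(r)·(1+z^{2r})^{(p-1)/(2r)}`. -/
def cUPrime (p : ℕ) (z : ℚ) : ℚ :=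
  (2 / ((p : ℚ) - 1)) *
    ∑ r ∈ ((p - 1) / 2).divisors,
      (Nat.totient r : ℚ) * (1 + z ^ (2 * r)) ^ ((p - 1) / (2 * r))

/-- Generating function by valency for undirected circulant graphs of order `2q`,
`q` an odd prime:
`c_u(2q,z) = (1+z)·(2/(q-1))·∑_{r | (q-1)/2} φ(r)·(1+z^{2r})^{(q-1)/r}`. -/
def cUTwicePrime (q : ℕ) (z : ℚ) : ℚ :=
  (1 + z) * ((2 / ((q : ℚ) - 1)) *
    ∑ r ∈ ((q - 1) / 2).divisors,
      (Nat.totient r : ℚ) * (1 + z ^ (2 * r)) ^ ((q - 1) / r))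

/-!
The difference of the directed and the undirected generating function is a sum over *odd* divisors
only. In `c_d`, write the even divisors as `2s`: since `φ(2s)` is `2φ(s)` for even `s` and `φ(s)`
for odd `s`, subtracting the sum defining `c_u` cancels every even `s` and leaves the odd ones with
a minus sign. The resulting expressions for the orders `p` and `2q` run over the odd divisors of
`p - 1` and of `q - 1`, with the same exponents; as `p - 1 = 2(q - 1)`, these divisors agree, and
only the prefactors `1/(p - 1)` and `(1 + z)/(q - 1)` differ.
-/

theorem filter_dvd_divisors_mul {m : ℕ} (hm : m ≠ 0) (n : ℕ) :
    {r ∈ (m * n).divisors | m ∣ r} = n.divisors.image (m * ·) := by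
  ext r
  simp only [mem_filter, mem_image, Nat.mem_divisors]
  constructor
  · rintro ⟨⟨hr, hmn⟩, s, rfl⟩
    exact ⟨s, ⟨Nat.dvd_of_mul_dvd_mul_left (Nat.pos_of_ne_zero hm) hr, right_ne_zero_of_mul hmn⟩,
      rfl⟩
  · rintro ⟨s, ⟨hs, hn⟩, rfl⟩
    exact ⟨⟨Nat.mul_dvd_mul_left m hs, mul_ne_zero hm hn⟩, dvd_mul_right m s⟩

theorem filter_not_dvd_divisors_prime_mul {p : ℕ} (hp : p.Prime) (n : ℕ) :
    {r ∈ (p * n).divisors | ¬p ∣ r} = {r ∈ n.divisors | ¬p ∣ r} := by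
  ext r
  simp only [mem_filter, Nat.mem_divisors, mul_ne_zero_iff, hp.ne_zero, ne_eq, not_false_eq_true,
    true_and, and_congr_left_iff]
  intro hr _
  exact (hp.coprime_iff_not_dvd.2 hr).symm.dvd_mul_left

theorem sum_divisors_prime_mul {M : Type*} [AddCommMonoid M] {p : ℕ} (hp : p.Prime) (n : ℕ)
    (f : ℕ → M) :
    ∑ r ∈ (p * n).divisors, f r =
      ∑ r ∈ n.divisors, f (p * r) + ∑ r ∈ n.divisors with ¬p ∣ r, f r := by
  rw [← sum_filter_add_sum_filter_not _ (p ∣ ·), filter_not_dvd_divisors_prime_mul hp,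
    filter_dvd_divisors_mul hp.ne_zero, sum_image (mul_right_injective₀ hp.ne_zero).injOn]

theorem totient_prime_mul_add_ite {p : ℕ} (hp : p.Prime) (n : ℕ) :
    (p * n).totient + (if p ∣ n then 0 else n.totient) = p * n.totient := by
  split_ifs with h
  · rw [Nat.totient_mul_of_prime_of_dvd hp h, add_zero]
  · rw [Nat.totient_mul_of_prime_of_not_dvd hp h, ← add_one_mul, Nat.sub_add_cancel hp.one_le]

theorem sum_divisors_prime_mul_totient_mul_sub {R : Type*} [Ring R] {p : ℕ} (hp : p.Prime)
    (n : ℕ) (f : ℕ → R) :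
    ∑ r ∈ (p * n).divisors, (r.totient : R) * f r -
        p * ∑ r ∈ n.divisors, (r.totient : R) * f (p * r) =
      ∑ r ∈ n.divisors with ¬p ∣ r, (r.totient : R) * (f r - f (p * r)) := by
  have prime_mul_sum : p * ∑ r ∈ n.divisors, (r.totient : R) * f (p * r) =
      ∑ r ∈ n.divisors, ((p * r).totient : R) * f (p * r) +
        ∑ r ∈ n.divisors with ¬p ∣ r, (r.totient : R) * f (p * r) := by
    rw [sum_filter, ← sum_add_distrib, mul_sum]
    refine sum_congr rfl fun r _ ↦ ?_
    rw [← mul_assoc, ← Nat.cast_mul, ← totient_prime_mul_add_ite hp r]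
    split_ifs <;> simp [add_mul]
  rw [prime_mul_sum, sum_divisors_prime_mul hp, add_sub_add_left_eq_sub, ← sum_sub_distrib]
  simp only [mul_sub]

theorem cDPrime_sub_cUPrime {p : ℕ} (hp : Odd p) (z : ℚ) :
    cDPrime p z - cUPrime p z = 1 / ((p : ℚ) - 1) * ∑ r ∈ (p - 1).divisors with ¬2 ∣ r,
      (r.totient : ℚ) * ((1 + z ^ r) ^ ((p - 1) / r) -
        (1 + z ^ (2 * r)) ^ ((p - 1) / (2 * r))) := by
  obtain ⟨n, rfl⟩ := hp
  have odd_part := sum_divisors_prime_mul_totient_mul_sub Nat.prime_two n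
    fun r ↦ (1 + z ^ r) ^ (2 * n / r)
  rw [cDPrime, cUPrime, Nat.add_sub_cancel, Nat.mul_div_cancel_left n two_pos,
    filter_not_dvd_divisors_prime_mul Nat.prime_two, ← odd_part]
  push_cast
  ring

theorem cDTwicePrime_sub_cUTwicePrime {q : ℕ} (hq : Odd q) (z : ℚ) :
    cDTwicePrime q z - cUTwicePrime q z =
      (1 + z) * (1 / ((q : ℚ) - 1) * ∑ r ∈ (q - 1).divisors with ¬2 ∣ r,
        (r.totient : ℚ) * ((1 + z ^ r) ^ (2 * (q - 1) / r) -
          (1 + z ^ (2 * r)) ^ ((q - 1) / r))) := by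
  obtain ⟨n, rfl⟩ := hq
  have odd_part := sum_divisors_prime_mul_totient_mul_sub Nat.prime_two n
    fun r ↦ (1 + z ^ r) ^ (2 * (2 * n) / r)
  simp only [Nat.mul_div_mul_left _ _ two_pos] at odd_part
  rw [cDTwicePrime, cUTwicePrime, Nat.add_sub_cancel, Nat.mul_div_cancel_left n two_pos,
    filter_not_dvd_divisors_prime_mul Nat.prime_two, ← odd_part]
  push_cast
  ring

theorem two_mul_one_add_z_mul_cDsubU_general {p q : ℕ} (hq : Odd q) (hq1 : 1 < q)
    (hpq : p + 1 = 2 * q) (z : ℚ) :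
    2 * (1 + z) * (cDPrime p z - cUPrime p z) = cDTwicePrime q z - cUTwicePrime q z := by
  have p_odd : Odd p := ⟨q - 1, by omega⟩
  have p_sub_one : p - 1 = 2 * (q - 1) := by omega
  have p_sub_one_cast : (p : ℚ) - 1 = 2 * (q - 1) := by
    have : (p : ℚ) + 1 = 2 * q := mod_cast hpq
    linear_combination this
  rw [cDPrime_sub_cUPrime p_odd, cDTwicePrime_sub_cUTwicePrime hq, p_sub_one_cast, p_sub_one,
    filter_not_dvd_divisors_prime_mul Nat.prime_two]
  simp only [Nat.mul_div_mul_left _ _ two_pos]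
  field_simp

/-- If `p > 3` and `q = (p+1)/2` are both prime, then for every `z`,
`2·(1+z)·(c_d(p,z) − c_u(p,z)) = c_d(p+1,z) − c_u(p+1,z)`. -/
theorem two_mul_one_add_z_mul_cDsubU (p q : ℕ) (hp : p.Prime) (hp3 : 3 < p)
    (hq : q.Prime) (hpq : p + 1 = 2 * q) (z : ℚ) :
    2 * (1 + z) * (cDPrime p z - cUPrime p z) =
      cDTwicePrime q z - cUTwicePrime q z :=
  two_mul_one_add_z_mul_cDsubU_general (hq.odd_of_ne_two (by omega)) hq.one_lt hpq z
end
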